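/- Let b, ρ ∈ ℂ with Re(ρ) > 0 and let z > 0 be real. Then: (i) for c, ν ∈ ℂ with Re(c) > 1/2 and Re(ν) > -3/2, the generalized four parameter spherical Bessel function satisfies g_ν^{(b,c)}(z;ρ) = (√π (z/2)^ν)/(2 Γ(ν+3/2)² Γ(c-1/2)) · ∫_0^∞ t^{c+ν-1} e^{-t-ρ/t} ₀F₃(-; (2ν+3)/2, (2ν+3)/4, (2ν+5)/4; -b z² t²/16) dt; and (ii) for λ, ν ∈ ℂ with Re(λ) > 0 and Re(ν) > -1, the generalized four parameter Bessel-Clifford function satisfies C_ν^{(b,λ)}(z;ρ) = (1/(Γ(ν+1)² Γ(λ))) · ∫_0^∞ t^{λ+ν-1} e^{-t-ρ/t} ₀F₃(-; ν+1, (ν+1)/2, (ν+2)/2; -b z t²/4) dt, both integrals being over real t ∈ (0,∞). -/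

import Mathlib

open Complex MeasureTheory Real Set

/-- Extended Gamma function `Γ_ρ(x) = ∫_0^∞ t^(x-1) e^(-t-ρ/t) dt`. -/
noncomputable def extGamma (ρ x : ℂ) : ℂ :=
  ∫ t in Ioi (0:ℝ), (t:ℂ) ^ (x - 1) * Complex.exp (-(t:ℂ) - ρ / (t:ℂ))

/-- Generalized Pochhammer symbol `(c;ρ)_μ = Γ_ρ(c+μ)/Γ(c)`. -/
noncomputable def genPoch (c ρ μ : ℂ) : ℂ := extGamma ρ (c + μ) / Complex.Gamma c

/-- Unified four parameter Bessel function `G_ν^{(b,c)}(z;ρ)` with complex order,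
powers being principal complex powers. -/
noncomputable def unifiedG (b c ν ρ z : ℂ) : ℂ :=
  ∑' k : ℕ, (-b) ^ k * genPoch c ρ (2 * (k:ℂ) + ν) * (z / 2) ^ (2 * (k:ℂ) + ν) /
    ((k.factorial : ℂ) * Complex.Gamma (ν + (k:ℂ) + 1) * Complex.Gamma (ν + 2 * (k:ℂ) + 1))

/-- Unified four parameter Bessel function with integer order, powers being integer powers. -/
noncomputable def unifiedGInt (b c ρ : ℂ) (ν : ℤ) (z : ℂ) : ℂ :=
  ∑' k : ℕ, (-b) ^ k * genPoch c ρ (2 * (k:ℂ) + (ν:ℂ)) * (z / 2) ^ (2 * (k:ℤ) + ν) /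
    ((k.factorial : ℂ) * Complex.Gamma ((ν:ℂ) + (k:ℂ) + 1) * Complex.Gamma ((ν:ℂ) + 2 * (k:ℂ) + 1))

/-- Pochhammer symbol `(a)_k = Γ(a+k)/Γ(a)`. -/
noncomputable def poch (a : ℂ) (k : ℕ) : ℂ := Complex.Gamma (a + (k:ℂ)) / Complex.Gamma a

/-- Generalized hypergeometric function `₀F₃`. -/
noncomputable def hyp0F3 (a₁ a₂ a₃ w : ℂ) : ℂ :=
  ∑' k : ℕ, w ^ k / (poch a₁ k * poch a₂ k * poch a₃ k * (k.factorial : ℂ))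

/-- Generalized hypergeometric function `₂F₃`. -/
noncomputable def hyp2F3 (a₁ a₂ b₁ b₂ b₃ w : ℂ) : ℂ :=
  ∑' k : ℕ, poch a₁ k * poch a₂ k * w ^ k /
    (poch b₁ k * poch b₂ k * poch b₃ k * (k.factorial : ℂ))

/-- Bessel function of the first kind `J_μ(z)` for real `z > 0`. -/
noncomputable def besselJ (μ : ℂ) (z : ℝ) : ℂ :=
  ∑' k : ℕ, (-1) ^ k * ((z:ℂ) / 2) ^ (2 * (k:ℂ) + μ) /
    ((k.factorial : ℂ) * Complex.Gamma (μ + (k:ℂ) + 1))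

/-- Generalized four parameter spherical Bessel function
`g_ν^{(b,c)}(z;ρ) = √(π/(2z)) · G_{ν+1/2}^{(b,c-1/2)}(z;ρ)`. -/
noncomputable def sphG (b c ν ρ : ℂ) (z : ℝ) : ℂ :=
  (Real.sqrt (π / (2 * z)) : ℂ) * unifiedG b (c - 1/2) (ν + 1/2) ρ (z:ℂ)

/-- Generalized four parameter Bessel-Clifford function
`C_ν^{(b,λ)}(z;ρ) = z^{-ν/2} · G_ν^{(b,λ)}(2√z;ρ)` for real `z > 0`. -/
noncomputable def cliffC (b lam ν ρ : ℂ) (z : ℝ) : ℂ :=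
  (z:ℂ) ^ (-ν / 2) * unifiedG b lam ν ρ ((2 * Real.sqrt z : ℝ) : ℂ)

/-- The integrand of `extGamma` is integrable for every exponent, since `exp (-ρ / t)` decays
faster than any power of `t` at the origin. -/
theorem integrableOn_extGamma {ρ : ℂ} (hρ : 0 < ρ.re) (x : ℂ) :
    IntegrableOn (fun t : ℝ => (t:ℂ) ^ (x - 1) * Complex.exp (-(t:ℂ) - ρ / (t:ℂ))) (Ioi 0) := by
  obtain ⟨n, hn⟩ := exists_nat_gt (-x.re)
  have hs : 0 < x.re + n := by linarith
  have hI := (Real.GammaIntegral_convergent hs).const_mul ((n.factorial : ℝ) / ρ.re ^ n)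
  refine Integrable.mono' hI ?_ ?_
  · refine ContinuousOn.aestronglyMeasurable (fun t ht => ?_) measurableSet_Ioi
    have ht0 : (t:ℂ) ≠ 0 := by exact_mod_cast (ne_of_gt ht : t ≠ 0)
    refine ContinuousAt.continuousWithinAt (ContinuousAt.mul ?_ ?_)
    · exact Complex.continuousAt_ofReal_cpow_const _ _ (Or.inr (ne_of_gt ht))
    · exact ContinuousAt.cexp ((Complex.continuous_ofReal.continuousAt.neg).sub
        (continuousAt_const.div Complex.continuous_ofReal.continuousAt ht0))
  · refine (ae_restrict_iff' measurableSet_Ioi).2 (Filter.Eventually.of_forall fun t ht => ?_)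
    have ht : 0 < t := ht
    rw [norm_mul, Complex.norm_cpow_eq_rpow_re_of_pos ht, Complex.norm_exp]
    have hre : (-(t:ℂ) - ρ / (t:ℂ)).re = -t + -(ρ.re / t) := by
      simp [Complex.div_ofReal_re, sub_eq_add_neg]
    have hexp : Real.exp (-(ρ.re / t)) ≤ (n.factorial : ℝ) / ρ.re ^ n * t ^ n := by
      have h1 := Real.pow_div_factorial_le_exp (ρ.re / t) (by positivity) n
      have h2 : 0 < (ρ.re / t) ^ n / (n.factorial : ℝ) := by positivity
      rw [Real.exp_neg]
      refine (inv_anti₀ h2 h1).trans (le_of_eq ?_)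
      rw [div_pow]
      field_simp
    rw [hre, Real.exp_add, show x.re + n - 1 = (x.re - 1) + n by ring, Real.rpow_add ht,
      Real.rpow_natCast]
    calc t ^ (x - 1).re * (Real.exp (-t) * Real.exp (-(ρ.re / t)))
        ≤ t ^ (x.re - 1) * (Real.exp (-t) * ((n.factorial : ℝ) / ρ.re ^ n * t ^ n)) := by
          rw [Complex.sub_re, Complex.one_re]; gcongr
      _ = _ := by ring

theorem norm_extGamma_integrand_le {ρ : ℂ} (hρ : 0 < ρ.re) (x : ℂ) {t : ℝ} (ht : 0 < t) :
    ‖(t:ℂ) ^ (x - 1) * Complex.exp (-(t:ℂ) - ρ / (t:ℂ))‖ ≤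
      Real.exp (-t) * t ^ (x.re - 1) := by
  rw [norm_mul, Complex.norm_cpow_eq_rpow_re_of_pos ht, Complex.norm_exp, mul_comm]
  have hre : (-(t:ℂ) - ρ / (t:ℂ)).re = -t - ρ.re / t := by
    simp [Complex.div_ofReal_re]
  rw [hre, Complex.sub_re, Complex.one_re]
  have : 0 < ρ.re / t := by positivity
  gcongr
  linarith

/-- The coefficients of the power series underlying the unified four parameter Bessel function. -/
noncomputable def besselCoeff (ν w : ℂ) (k : ℕ) : ℂ :=
  w ^ k / ((k.factorial : ℂ) * Complex.Gamma (ν + (k:ℂ) + 1) * Complex.Gamma (ν + 2 * (k:ℂ) + 1))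

theorem besselCoeff_succ {ν : ℂ} (hν : -1 < ν.re) (w : ℂ) (k : ℕ) :
    besselCoeff ν w (k + 1) = besselCoeff ν w k *
      (w / (((k:ℂ) + 1) * (ν + k + 1) * ((ν + 2 * k + 2) * (ν + 2 * k + 1)))) := by
  have hk : (0:ℝ) ≤ k := k.cast_nonneg
  have h1 : ν + k + 1 ≠ 0 := fun h => by
    have := congrArg Complex.re h; simp at this; linarith
  have h2 : ν + 2 * k + 1 ≠ 0 := fun h => by
    have := congrArg Complex.re h; simp at this; linarith
  have h3 : ν + 2 * k + 2 ≠ 0 := fun h => by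
    have := congrArg Complex.re h; simp at this; linarith
  have e1 : Complex.Gamma (ν + ((k + 1 : ℕ):ℂ) + 1) =
      (ν + k + 1) * Complex.Gamma (ν + k + 1) := by
    rw [← Complex.Gamma_add_one _ h1]; push_cast; ring_nf
  have e2 : Complex.Gamma (ν + 2 * ((k + 1 : ℕ):ℂ) + 1) =
      (ν + 2 * k + 2) * ((ν + 2 * k + 1) * Complex.Gamma (ν + 2 * k + 1)) := by
    rw [← Complex.Gamma_add_one _ h2,
      show ν + 2 * (k:ℂ) + 1 + 1 = ν + 2 * k + 2 by ring, ← Complex.Gamma_add_one _ h3]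
    push_cast; ring_nf
  rw [besselCoeff, besselCoeff, e1, e2, Nat.factorial_succ, pow_succ, div_mul_div_comm]
  push_cast
  congr 1
  ring

theorem summable_besselCoeff_mul_Gamma {ν : ℂ} (hν : -1 < ν.re) (w : ℂ) (σ : ℝ) :
    Summable fun k : ℕ => ‖besselCoeff ν w k‖ * Real.Gamma (σ + 2 * k) := by
  obtain ⟨N, hN⟩ := exists_nat_gt (2 * (‖w‖ * (|σ| + 1) ^ 2) + |σ| + 1)
  refine summable_of_ratio_norm_eventually_le (r := 1 / 2) (by norm_num) ?_
  filter_upwards [Filter.eventually_ge_atTop N] with k hk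
  have hkN : (N:ℝ) ≤ k := by exact_mod_cast hk
  have hσ := neg_abs_le σ
  have hσ' := le_abs_self σ
  have hσ0 := abs_nonneg σ
  have hw0 : 0 ≤ ‖w‖ * (|σ| + 1) ^ 2 := by positivity
  have hk0 : (1:ℝ) < k := by linarith
  have hpos : 0 < σ + 2 * k := by linarith
  have hG : Real.Gamma (σ + 2 * ((k + 1 : ℕ):ℝ)) =
      (σ + 2 * k + 1) * ((σ + 2 * k) * Real.Gamma (σ + 2 * k)) := by
    rw [← Real.Gamma_add_one hpos.ne', ← Real.Gamma_add_one (by linarith)]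
    push_cast; ring_nf
  have hΓ := (Real.Gamma_pos_of_pos hpos).le
  have n1 : (k:ℝ) ≤ ‖ν + k + 1‖ := by
    refine le_trans ?_ (Complex.re_le_norm _); simp; linarith
  have n2 : 2 * (k:ℝ) ≤ ‖ν + 2 * k + 1‖ := by
    refine le_trans ?_ (Complex.re_le_norm _); simp; linarith
  have n3 : 2 * (k:ℝ) + 1 ≤ ‖ν + 2 * k + 2‖ := by
    refine le_trans ?_ (Complex.re_le_norm _); simp; linarith
  have n4 : ‖(k:ℂ) + 1‖ = k + 1 := by
    rw [show (k:ℂ) + 1 = ((k + 1 : ℕ) : ℂ) by push_cast; ring, Complex.norm_natCast]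
    push_cast; ring
  have key : ‖w / (((k:ℂ) + 1) * (ν + k + 1) * ((ν + 2 * k + 2) * (ν + 2 * k + 1)))‖ *
      ((σ + 2 * k + 1) * (σ + 2 * k)) ≤ 1 / 2 := by
    rw [norm_div, norm_mul, norm_mul, norm_mul, n4, div_mul_eq_mul_div]
    have hden : (k + 1) * (k:ℝ) * ((2 * k + 1) * (2 * k)) ≤
        (k + 1) * ‖ν + k + 1‖ * (‖ν + 2 * k + 2‖ * ‖ν + 2 * k + 1‖) := by gcongr
    have hnum : ‖w‖ * ((σ + 2 * k + 1) * (σ + 2 * k)) ≤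
        ‖w‖ * (((|σ| + 1) * (2 * k + 1)) * ((|σ| + 1) * (2 * k))) := by
      gcongr <;> nlinarith
    have hden0 : 0 < (k + 1) * (k:ℝ) * ((2 * k + 1) * (2 * k)) := by positivity
    rw [div_le_iff₀ (hden0.trans_le hden)]
    have h1 : 2 * (‖w‖ * (|σ| + 1) ^ 2) ≤ (k + 1) * (k:ℝ) := by nlinarith
    have h2 : (0:ℝ) ≤ (2 * k + 1) * (2 * k) := by positivity
    have h3 := mul_le_mul_of_nonneg_right h1 h2
    nlinarith
  have h0 : 0 ≤ ‖besselCoeff ν w k‖ * Real.Gamma (σ + 2 * k) := by positivity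
  rw [Real.norm_of_nonneg h0, hG, Real.norm_of_nonneg (by positivity), besselCoeff_succ hν,
    norm_mul (besselCoeff ν w k)]
  calc _ = ‖besselCoeff ν w k‖ * Real.Gamma (σ + 2 * k) *
      (‖w / (((k:ℂ) + 1) * (ν + k + 1) * ((ν + 2 * k + 2) * (ν + 2 * k + 1)))‖ *
      ((σ + 2 * k + 1) * (σ + 2 * k))) := by ring
    _ ≤ ‖besselCoeff ν w k‖ * Real.Gamma (σ + 2 * k) * (1 / 2) := by gcongr
    _ = _ := by ring

theorem tsum_besselCoeff_mul_extGamma {ρ ν : ℂ} (hρ : 0 < ρ.re) (hν : -1 < ν.re) (w x : ℂ) :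
    ∑' k : ℕ, besselCoeff ν w k * extGamma ρ (x + 2 * k) =
      ∫ t in Ioi (0:ℝ), ∑' k : ℕ, besselCoeff ν w k *
        ((t:ℂ) ^ (x + 2 * k - 1) * Complex.exp (-(t:ℂ) - ρ / (t:ℂ))) := by
  have hint (k : ℕ) := (integrableOn_extGamma hρ (x + 2 * k)).const_mul (besselCoeff ν w k)
  rw [← integral_tsum_of_summable_integral_norm hint]
  · simp only [extGamma, integral_const_mul]
  · obtain ⟨N, hN⟩ := exists_nat_gt (-x.re)
    refine Summable.of_norm_bounded_eventually_nat (summable_besselCoeff_mul_Gamma hν w x.re) ?_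
    filter_upwards [Filter.eventually_ge_atTop N] with k hk
    have hkN : (N:ℝ) ≤ k := by exact_mod_cast hk
    have hk0 : (0:ℝ) ≤ k := k.cast_nonneg
    have hpos : 0 < x.re + 2 * k := by linarith
    rw [Real.norm_of_nonneg (integral_nonneg fun _ => norm_nonneg _)]
    simp only [norm_mul (besselCoeff ν w k)]
    rw [integral_const_mul, Real.Gamma_eq_integral hpos]
    refine mul_le_mul_of_nonneg_left ?_ (norm_nonneg _)
    refine setIntegral_mono_on (integrableOn_extGamma hρ _).norm
      (Real.GammaIntegral_convergent hpos) measurableSet_Ioi fun t ht => ?_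
    have h := norm_extGamma_integrand_le hρ (x + 2 * k) ht
    simpa using h

theorem poch_zero {a : ℂ} (ha : 0 < a.re) : poch a 0 = 1 := by
  simp [poch, Complex.Gamma_ne_zero_of_re_pos ha]

theorem poch_succ {a : ℂ} (ha : 0 < a.re) (k : ℕ) : poch a (k + 1) = (a + k) * poch a k := by
  have h : a + k ≠ 0 := fun h => by
    have h' := congrArg Complex.re h
    have hk : (0:ℝ) ≤ k := k.cast_nonneg
    simp at h'; linarith
  rw [poch, poch, ← mul_div_assoc, ← Complex.Gamma_add_one _ h]
  push_cast; ring_nf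

theorem poch_half_mul_poch_half {a : ℂ} (ha : 0 < a.re) (k : ℕ) :
    poch (a / 2) k * poch ((a + 1) / 2) k * 4 ^ k = poch a (2 * k) := by
  have h1 : 0 < (a / 2).re := by simpa using ha
  have h2 : 0 < ((a + 1) / 2).re := by simp; linarith
  induction k with
  | zero => simp [poch_zero ha, poch_zero h1, poch_zero h2]
  | succ k ih =>
    rw [show 2 * (k + 1) = 2 * k + 1 + 1 by ring, poch_succ ha, poch_succ ha, poch_succ h1,
      poch_succ h2, ← ih]
    push_cast; ring

theorem hyp0F3_eq_tsum_besselCoeff {ν : ℂ} (hν : -1 < ν.re) (w s : ℂ) :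
    hyp0F3 (ν + 1) ((ν + 1) / 2) ((ν + 2) / 2) (w * s ^ 2 / 4) =
      Complex.Gamma (ν + 1) ^ 2 * ∑' k : ℕ, besselCoeff ν w k * s ^ (2 * k) := by
  have ha : 0 < (ν + 1).re := by simp; linarith
  rw [hyp0F3, ← tsum_mul_left]
  refine tsum_congr fun k => ?_
  have h := poch_half_mul_poch_half ha k
  rw [show ν + 1 + 1 = ν + 2 by ring] at h
  have h' : (w * s ^ 2 / 4) ^ k / (poch (ν + 1) k * poch ((ν + 1) / 2) k * poch ((ν + 2) / 2) k *
      (k.factorial : ℂ)) = w ^ k * s ^ (2 * k) / (poch (ν + 1) k * poch (ν + 1) (2 * k) *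
      (k.factorial : ℂ)) := by
    rw [← h, div_pow, mul_pow, ← pow_mul, div_div]
    congr 1; ring
  have hΓ := Complex.Gamma_ne_zero_of_re_pos ha
  rw [h', besselCoeff, poch, poch]
  push_cast
  rw [show ν + 1 + (k:ℂ) = ν + k + 1 by ring, show ν + 1 + 2 * (k:ℂ) = ν + 2 * k + 1 by ring]
  field_simp

/-- Integral representation of the unified four parameter Bessel function. -/
theorem unifiedG_eq_integral {ρ ν : ℂ} (hρ : 0 < ρ.re) (hν : -1 < ν.re) (b c : ℂ) {y : ℂ}
    (hy : y ≠ 0) :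
    unifiedG b c ν ρ y = (y / 2) ^ ν / (Complex.Gamma (ν + 1) ^ 2 * Complex.Gamma c) *
      ∫ t in Ioi (0:ℝ), (t:ℂ) ^ (c + ν - 1) * Complex.exp (-(t:ℂ) - ρ / (t:ℂ)) *
        hyp0F3 (ν + 1) ((ν + 1) / 2) ((ν + 2) / 2) (-b * (y / 2) ^ 2 * (t:ℂ) ^ 2 / 4) := by
  have hΓ : Complex.Gamma (ν + 1) ≠ 0 :=
    Complex.Gamma_ne_zero_of_re_pos (by simp; linarith)
  have hy2 : y / 2 ≠ 0 := by simpa using hy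
  have hG : unifiedG b c ν ρ y = (y / 2) ^ ν / Complex.Gamma c *
      ∑' k : ℕ, besselCoeff ν (-b * (y / 2) ^ 2) k * extGamma ρ (c + ν + 2 * k) := by
    rw [unifiedG, ← tsum_mul_left]
    refine tsum_congr fun k => ?_
    have hp : (y / 2) ^ (2 * (k:ℂ) + ν) = ((y / 2) ^ 2) ^ k * (y / 2) ^ ν := by
      rw [Complex.cpow_add _ _ hy2, ← pow_mul, ← Complex.cpow_natCast]
      push_cast; rfl
    rw [genPoch, besselCoeff, hp, mul_pow, show c + (2 * (k:ℂ) + ν) = c + ν + 2 * k by ring]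
    ring
  have hI : (∫ t in Ioi (0:ℝ), (t:ℂ) ^ (c + ν - 1) * Complex.exp (-(t:ℂ) - ρ / (t:ℂ)) *
        hyp0F3 (ν + 1) ((ν + 1) / 2) ((ν + 2) / 2) (-b * (y / 2) ^ 2 * (t:ℂ) ^ 2 / 4)) =
      Complex.Gamma (ν + 1) ^ 2 * ∫ t in Ioi (0:ℝ), ∑' k : ℕ,
        besselCoeff ν (-b * (y / 2) ^ 2) k *
          ((t:ℂ) ^ (c + ν + 2 * k - 1) * Complex.exp (-(t:ℂ) - ρ / (t:ℂ))) := by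
    rw [← integral_const_mul]
    refine setIntegral_congr_fun measurableSet_Ioi fun t ht => ?_
    have ht0 : (t:ℂ) ≠ 0 := by exact_mod_cast (ne_of_gt ht : t ≠ 0)
    rw [hyp0F3_eq_tsum_besselCoeff hν, mul_left_comm, ← tsum_mul_left]
    congr 1
    refine tsum_congr fun k => ?_
    have hp : (t:ℂ) ^ (c + ν + 2 * k - 1) = (t:ℂ) ^ (c + ν - 1) * (t:ℂ) ^ (2 * k) := by
      rw [← Complex.cpow_natCast, ← Complex.cpow_add _ _ ht0]
      push_cast; ring_nf
    rw [hp]; ring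
  rw [hG, hI, tsum_besselCoeff_mul_extGamma hρ hν]
  field_simp

theorem stmt19 (b ρ : ℂ) (hρ : 0 < ρ.re) (z : ℝ) (hz : 0 < z) :
    (∀ c ν : ℂ, 1/2 < c.re → -(3/2 : ℝ) < ν.re →
      sphG b c ν ρ z =
        (Real.sqrt π : ℂ) * ((z:ℂ) / 2) ^ ν /
            (2 * Complex.Gamma (ν + 3/2) ^ 2 * Complex.Gamma (c - 1/2)) *
          ∫ t in Ioi (0:ℝ), (t:ℂ) ^ (c + ν - 1) * Complex.exp (-(t:ℂ) - ρ / (t:ℂ)) *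
            hyp0F3 ((2 * ν + 3) / 2) ((2 * ν + 3) / 4) ((2 * ν + 5) / 4)
              (-b * (z:ℂ) ^ 2 * (t:ℂ) ^ 2 / 16)) ∧
    (∀ lam ν : ℂ, 0 < lam.re → -1 < ν.re →
      cliffC b lam ν ρ z =
        1 / (Complex.Gamma (ν + 1) ^ 2 * Complex.Gamma lam) *
          ∫ t in Ioi (0:ℝ), (t:ℂ) ^ (lam + ν - 1) * Complex.exp (-(t:ℂ) - ρ / (t:ℂ)) *
            hyp0F3 (ν + 1) ((ν + 1) / 2) ((ν + 2) / 2)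
              (-b * (z:ℂ) * (t:ℂ) ^ 2 / 4)) := by
  constructor
  · intro c ν _ hν
    have hν' : -1 < (ν + 1 / 2).re := by
      simp only [Complex.add_re, Complex.div_ofNat_re, Complex.one_re]; linarith
    have hz0 : (z:ℂ) ≠ 0 := by exact_mod_cast hz.ne'
    have hconst : (Real.sqrt (π / (2 * z)) : ℂ) * ((z:ℂ) / 2) ^ (ν + 1 / 2) =
        (Real.sqrt π : ℂ) / 2 * ((z:ℂ) / 2) ^ ν := by
      have hcast : (z:ℂ) / 2 = ((z / 2 : ℝ) : ℂ) := by push_cast; rfl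
      have hhalf : ((z:ℂ) / 2) ^ (1 / 2 : ℂ) = (Real.sqrt (z / 2) : ℂ) := by
        rw [hcast, Real.sqrt_eq_rpow, Complex.ofReal_cpow (by positivity)]
        push_cast; rfl
      have hsqrt : Real.sqrt (π / (2 * z)) * Real.sqrt (z / 2) = Real.sqrt π / 2 := by
        rw [← Real.sqrt_mul (by positivity), show π / (2 * z) * (z / 2) = π / 2 ^ 2 by
          field_simp, Real.sqrt_div Real.pi_pos.le, Real.sqrt_sq (by norm_num)]
      have hsqrt' : (Real.sqrt (π / (2 * z)) : ℂ) * (Real.sqrt (z / 2) : ℂ) =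
          (Real.sqrt π : ℂ) / 2 := by exact_mod_cast congrArg Complex.ofReal hsqrt
      rw [Complex.cpow_add _ _ (by simpa using hz0), hhalf, ← hsqrt']
      ring
    rw [sphG, unifiedG_eq_integral hρ hν' b (c - 1 / 2) hz0, ← mul_assoc, ← mul_div_assoc, hconst]
    have e1 : ν + 1 / 2 + 1 = ν + 3 / 2 := by ring
    have e2 : (2 * ν + 3) / 2 = ν + 3 / 2 := by ring
    have e3 : (2 * ν + 3) / 4 = (ν + 3 / 2) / 2 := by ring
    have e4 : (2 * ν + 5) / 4 = (ν + 1 / 2 + 2) / 2 := by ring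
    have e5 : c - 1 / 2 + (ν + 1 / 2) - 1 = c + ν - 1 := by ring
    have e6 (t : ℝ) : -b * ((z:ℂ) / 2) ^ 2 * (t:ℂ) ^ 2 / 4 =
        -b * (z:ℂ) ^ 2 * (t:ℂ) ^ 2 / 16 := by ring
    simp only [e1, e2, e3, e4, e5, e6]
    congr 1
    ring
  · intro lam ν _ hν
    have hq : 0 < Real.sqrt z := Real.sqrt_pos.2 hz
    have hq0 : (Real.sqrt z : ℂ) ≠ 0 := by exact_mod_cast hq.ne'
    have hzq : (z:ℂ) = (Real.sqrt z : ℂ) * (Real.sqrt z : ℂ) := by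
      exact_mod_cast (Real.mul_self_sqrt hz.le).symm
    have hy : ((2 * Real.sqrt z : ℝ) : ℂ) ≠ 0 := by
      exact_mod_cast (by positivity : (2 * Real.sqrt z) ≠ 0)
    have hhalf : ((2 * Real.sqrt z : ℝ) : ℂ) / 2 = (Real.sqrt z : ℂ) := by
      push_cast; ring
    have hpow : (z:ℂ) ^ (-ν / 2) * (Real.sqrt z : ℂ) ^ ν = 1 := by
      rw [hzq, Complex.mul_cpow_ofReal_nonneg hq.le hq.le, ← Complex.cpow_add _ _ hq0,
        ← Complex.cpow_add _ _ hq0]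
      simp
    rw [cliffC, unifiedG_eq_integral hρ hν b lam hy, hhalf, ← mul_assoc, ← mul_div_assoc, hpow]
    have e (t : ℝ) : -b * (Real.sqrt z : ℂ) ^ 2 * (t:ℂ) ^ 2 / 4 =
        -b * (z:ℂ) * (t:ℂ) ^ 2 / 4 := by rw [hzq]; ring
    simp only [e]
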